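/- Let 1 ≤ m ≤ n−1 be integers, let A ⊂ ℝⁿ be Borel measurable, and let W₀ : A → G(n,m) be Lipschitzian. Then for ℒⁿ-almost every x ∈ A, limsup_{r→0⁺} ℋ^m(A ∩ B̄(x,r) ∩ (x + W₀(x))) / (α(m)·r^m) ≥ 1/2ⁿ, where B̄(x,r) is the closed Euclidean ball. -/

import Mathlib

open MeasureTheory Metric Filter
open scoped ENNReal NNReal RealInnerProductSpace Topology

noncomputable section

abbrev En (n : ℕ) : Type := EuclideanSpace ℝ (Fin n)

def projCLM {n : ℕ} (W : Submodule ℝ (En n)) : En n →L[ℝ] En n :=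
  W.subtypeL.comp (Submodule.orthogonalProjection W)

def spanW {n m : ℕ} (w : Fin m → En n → En n) (x : En n) : Submodule ℝ (En n) :=
  Submodule.span ℝ (Set.range fun i => w i x)

def affW {n m : ℕ} (w : Fin m → En n → En n) (x : En n) : Set (En n) :=
  {y | y - x ∈ spanW w x}

def gMap {n k : ℕ} (v : Fin k → En n → En n) (u : En n) (x : En n) : En k :=
  (WithLp.equiv 2 (Fin k → ℝ)).symm fun i => ⟪v i x, x - u⟫

def unitBallVol (m : ℕ) : ℝ≥0∞ := volume (ball (0 : En m) 1)

def phiEW (n m : ℕ) (E : Set (En n)) (w : Fin m → En n → En n) (B : Set (En n)) : ℝ≥0∞ :=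
  ∫⁻ x in E, μH[(m : ℝ)] (B ∩ affW w x) ∂volume

def Y0W (n m : ℕ) (E : Set (En n)) (v : Fin (n - m) → En n → En n) (u : En n) : ℝ≥0∞ :=
  μH[(m : ℝ)] (E ∩ {x | gMap v u x = 0})

def YmW (n m : ℕ) (F : Set (En n)) (v : Fin (n - m) → En n → En n) (u : En n) : ℝ≥0∞ :=
  liminf (fun j : ℕ =>
    (∫⁻ y in closedBall (0 : En (n - m)) (1 / (j + 1)),
        μH[(m : ℝ)] (F ∩ {x | gMap v u x = y}) ∂volume)
      / volume (closedBall (0 : En (n - m)) (1 / (j + 1)))) atTop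

def polyball {n m : ℕ} (w : Fin m → En n → En n) (x₀ : En n) (r : ℝ) : Set (En n) :=
  {x | ‖projCLM (spanW w x₀) (x - x₀)‖ ≤ r ∧ ‖projCLM (spanW w x₀)ᗮ (x - x₀)‖ ≤ r}


theorem dlb_vol_le_hausdorff (m : ℕ) (S : Set (En m)) : volume S ≤ μH[(m : ℝ)] S := by
  have h2 : volume S = volume ((WithLp.ofLp : En m → (Fin m → ℝ)) '' S) := by
    have h3 : (WithLp.ofLp : En m → (Fin m → ℝ)) '' S
        = (MeasurableEquiv.toLp 2 (Fin m → ℝ)) ⁻¹' S := by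
      ext y
      constructor
      · rintro ⟨x, hx, rfl⟩
        exact hx
      · intro hy
        exact ⟨_, hy, rfl⟩
    rw [h3]
    exact ((PiLp.volume_preserving_toLp (Fin m)).measure_preimage_equiv
      (f := MeasurableEquiv.toLp 2 (Fin m → ℝ)) S).symm
  rw [h2]
  have h4 := (PiLp.lipschitzWith_ofLp 2 (fun _ : Fin m => ℝ)).hausdorffMeasure_image_le
    (d := (m : ℝ)) (by positivity) S
  have h5 : (μH[(m : ℝ)] : Measure (Fin m → ℝ)) = volume := by
    have := hausdorffMeasure_pi_real (ι := Fin m)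
    simpa using this
  rw [h5] at h4
  simpa using h4

theorem dlb_vol_le_of_expand {n : ℕ} (s : Set (En n)) (T : En n → En n)
    (h : ∀ x ∈ s, ∀ y ∈ s, dist x y ≤ 2 * dist (T x) (T y)) :
    volume s ≤ 2 ^ n * volume (T '' s) := by
  have hinj : Set.InjOn T s := by
    intro x hx y hy hxy
    have := h x hx y hy
    rw [hxy, dist_self, mul_zero] at this
    exact dist_le_zero.1 this
  have hH : μH[(n : ℝ)] s ≤ 2 ^ n * μH[(n : ℝ)] (T '' s) := by
    have hl : LipschitzOnWith 2 (Function.invFunOn T s) (T '' s) := by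
      apply LipschitzOnWith.of_dist_le_mul
      rintro _ ⟨x, hx, rfl⟩ _ ⟨y, hy, rfl⟩
      rw [hinj.leftInvOn_invFunOn hx, hinj.leftInvOn_invFunOn hy]
      exact h x hx y hy
    have := hl.hausdorffMeasure_image_le (d := (n : ℝ)) (by positivity)
    rw [hinj.leftInvOn_invFunOn.image_image] at this
    simpa using this
  have e : (μH[(n : ℝ)] : Measure (En n)) = μH[(Module.finrank ℝ (En n) : ℝ)] := by simp
  have : (μH[(n : ℝ)] : Measure (En n)).IsAddHaarMeasure := by
    rw [e]; infer_instance
  have hc := Measure.isAddLeftInvariant_eq_smul (volume : Measure (En n)) (μH[(n : ℝ)])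
  rw [hc]
  simp only [Measure.smul_apply]
  rw [ENNReal.smul_def, ENNReal.smul_def, smul_eq_mul, smul_eq_mul, mul_left_comm]
  gcongr

/-- averaged estimate -/
theorem dlb_avg {n m : ℕ} (E : Set (En n)) (hE : IsCompact E) (K : ℝ≥0)
    (L : En n → (En m →L[ℝ] En n)) (hL : LipschitzOnWith K L E)
    (hL1 : ∀ x ∈ E, ∀ w, ‖L x w‖ ≤ ‖w‖) (r : ℝ) (hr : 0 ≤ r) (hKr : K * r ≤ 1 / 2) :
    (volume : Measure (En n)) {x | x ∈ E ∧ volume (closedBall (0 : En m) r) ≤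
        2 * volume {w : En m | w ∈ closedBall 0 r ∧ x + L x w ∉ E}} *
          volume (closedBall (0 : En m) r) ≤
      2 * (2 ^ n * volume (cthickening r E \ E)) * volume (closedBall (0 : En m) r) := by
  set B : Set (En m) := closedBall 0 r with hB
  have hBc : IsCompact B := isCompact_closedBall _ _
  have hcont : ContinuousOn (fun p : En n × En m => p.1 + L p.1 p.2) (E ×ˢ B) := by
    apply continuousOn_fst.add
    exact (hL.continuousOn.comp continuousOn_fst (fun p hp => hp.1)).clm_apply continuousOn_snd
  have hS : IsClosed ((E ×ˢ B) ∩ (fun p : En n × En m => p.1 + L p.1 p.2) ⁻¹' E) :=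
    hcont.preimage_isClosed_of_isClosed (hE.isClosed.prod hBc.isClosed) hE.isClosed
  set G : Set (En n × En m) := {p | p.1 ∈ E ∧ p.2 ∈ B ∧ p.1 + L p.1 p.2 ∉ E} with hG
  have hGm : MeasurableSet G := by
    have : G = (E ×ˢ B) \ ((E ×ˢ B) ∩ (fun p : En n × En m => p.1 + L p.1 p.2) ⁻¹' E) := by
      ext p
      simp only [hG, Set.mem_setOf_eq, Set.mem_diff, Set.mem_prod, Set.mem_inter_iff,
        Set.mem_preimage]
      tauto
    rw [this]
    exact (hE.isClosed.prod hBc.isClosed).measurableSet.diff hS.measurableSet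
  have h1 : ((volume : Measure (En n)).prod (volume : Measure (En m))) G =
      ∫⁻ x, volume (Prod.mk x ⁻¹' G) := Measure.prod_apply hGm
  have h2 : ((volume : Measure (En n)).prod (volume : Measure (En m))) G =
      ∫⁻ w, volume ((fun x => (x, w)) ⁻¹' G) := Measure.prod_apply_symm hGm
  have h3 : ∫⁻ w, volume ((fun x : En n => (x, w)) ⁻¹' G) ≤
      (2 ^ n * volume (cthickening r E \ E)) * volume B := by
    rw [← lintegral_indicator_const hBc.measurableSet]
    apply lintegral_mono
    intro w
    by_cases hw : w ∈ B
    · simp only [Set.indicator_of_mem hw]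
      have hwr : ‖w‖ ≤ r := by simpa [hB] using hw
      refine (dlb_vol_le_of_expand _ (fun x => x + L x w) ?_).trans ?_
      · intro x hx y hy
        have hxE : x ∈ E := hx.1
        have hyE : y ∈ E := hy.1
        have a1 : ‖L x w - L y w‖ ≤ 1 / 2 * dist x y := by
          have := hL.dist_le_mul x hxE y hyE
          rw [dist_eq_norm] at this
          calc ‖L x w - L y w‖ = ‖(L x - L y) w‖ := by simp
            _ ≤ ‖L x - L y‖ * ‖w‖ := ContinuousLinearMap.le_opNorm _ _
            _ ≤ (K * dist x y) * r := by gcongr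
            _ = (K * r) * dist x y := by ring
            _ ≤ _ := by gcongr
        have a2 : dist x y ≤ dist (x + L x w) (y + L y w) + ‖L x w - L y w‖ := by
          rw [dist_eq_norm, dist_eq_norm]
          have : x - y = (x + L x w - (y + L y w)) - (L x w - L y w) := by abel
          rw [this]
          exact (norm_sub_le _ _).trans (by simp)
        linarith
      · gcongr
        rintro _ ⟨x, hx, rfl⟩
        refine ⟨?_, hx.2.2⟩
        apply mem_cthickening_of_dist_le _ x _ _ hx.1
        simpa using (hL1 x hx.1 w).trans hwr
    · have : (fun x : En n => (x, w)) ⁻¹' G = ∅ := by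
        ext x; simp [hG, hw]
      simp [this]
  have h4 := mul_meas_ge_le_lintegral (μ := (volume : Measure (En n)))
    (measurable_measure_prodMk_left (ν := (volume : Measure (En m))) hGm) (volume B / 2)
  rw [← h1, h2] at h4
  have h5 := h4.trans h3
  have hsub : {x | x ∈ E ∧ volume B ≤ 2 * volume {w : En m | w ∈ B ∧ x + L x w ∉ E}} ⊆
      {x | volume B / 2 ≤ volume (Prod.mk x ⁻¹' G)} := by
    rintro x ⟨hx, hx2⟩
    have : Prod.mk x ⁻¹' G = {w : En m | w ∈ B ∧ x + L x w ∉ E} := by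
      ext w; simp [hG, hx]
    simp only [Set.mem_setOf_eq, this]
    exact ENNReal.div_le_of_le_mul' hx2
  calc _ ≤ volume {x | volume B / 2 ≤ volume (Prod.mk x ⁻¹' G)} * volume B := by gcongr
    _ = 2 * (volume B / 2 * volume {x | volume B / 2 ≤ volume (Prod.mk x ⁻¹' G)}) := by
        rw [← mul_assoc, ENNReal.mul_div_cancel (by simp) (by simp), mul_comm]
    _ ≤ 2 * ((2 ^ n * volume (cthickening r E \ E)) * volume B) := by gcongr
    _ = _ := by ring

theorem dlb_freq {n m : ℕ} (E : Set (En n)) (hE : IsCompact E) (K : ℝ≥0)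
    (L : En n → (En m →L[ℝ] En n)) (hL : LipschitzOnWith K L E)
    (hL1 : ∀ x ∈ E, ∀ w, ‖L x w‖ ≤ ‖w‖) :
    volume {x | x ∈ E ∧ ¬ ∃ᶠ r in 𝓝[>] (0 : ℝ), volume (closedBall (0 : En m) r) ≤
        2 * volume {w : En m | w ∈ closedBall 0 r ∧ x + L x w ∈ E}} = 0 := by
  have hlim : Tendsto (fun r => 2 * (2 ^ n * volume (cthickening r E \ E))) (𝓝[>] (0 : ℝ)) (𝓝 0) := by
    have t1 := (tendsto_measure_cthickening_of_isCompact (μ := (volume : Measure (En n))) hE).mono_left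
      (nhdsWithin_le_nhds (s := Set.Ioi 0))
    have t2 : Tendsto (fun r => volume (cthickening r E \ E)) (𝓝[>] (0 : ℝ)) (𝓝 0) := by
      have t3 : Tendsto (fun r => volume (cthickening r E) - volume E) (𝓝[>] (0 : ℝ))
          (𝓝 (volume E - volume E)) :=
        ENNReal.Tendsto.sub t1 tendsto_const_nhds (Or.inl hE.measure_lt_top.ne)
      rw [tsub_self] at t3
      refine t3.congr (fun r => ?_)
      rw [measure_diff (self_subset_cthickening E) hE.measurableSet.nullMeasurableSet
        hE.measure_lt_top.ne]
    have t4 := ENNReal.Tendsto.const_mul (a := 2 * 2 ^ n) t2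
      (Or.inr (ENNReal.mul_ne_top (by simp) (by simp)))
    simpa [mul_assoc] using t4
  have hsub : {x | x ∈ E ∧ ¬ ∃ᶠ r in 𝓝[>] (0 : ℝ), volume (closedBall (0 : En m) r) ≤
        2 * volume {w : En m | w ∈ closedBall 0 r ∧ x + L x w ∈ E}} ⊆
      ⋃ N : ℕ, {x | x ∈ E ∧ ∀ r ∈ Set.Ioo (0 : ℝ) (1 / ((N : ℝ) + 1)),
        volume (closedBall (0 : En m) r) ≤
          2 * volume {w : En m | w ∈ closedBall 0 r ∧ x + L x w ∉ E}} := by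
    rintro x ⟨hx, hx2⟩
    rw [not_frequently, eventually_nhdsWithin_iff, Metric.eventually_nhds_iff] at hx2
    obtain ⟨ε, hε, h⟩ := hx2
    obtain ⟨N, hN⟩ := exists_nat_one_div_lt hε
    rw [Set.mem_iUnion]
    refine ⟨N, hx, fun r hr => ?_⟩
    have hr2 := h (y := r) (by rw [Real.dist_eq, sub_zero, abs_of_pos hr.1]; exact hr.2.trans hN) hr.1
    by_contra hcon
    push Not at hr2 hcon
    have hfin : volume (closedBall (0 : En m) r) ≠ ∞ := measure_closedBall_lt_top.ne
    have hle : volume (closedBall (0 : En m) r) ≤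
        volume {w : En m | w ∈ closedBall 0 r ∧ x + L x w ∈ E} +
        volume {w : En m | w ∈ closedBall 0 r ∧ x + L x w ∉ E} := by
      refine (measure_mono ?_).trans (measure_union_le _ _)
      intro w hw
      by_cases hh : x + L x w ∈ E
      · exact Or.inl ⟨hw, hh⟩
      · exact Or.inr ⟨hw, hh⟩
    have := ENNReal.add_lt_add hr2 hcon
    rw [← mul_add, ← two_mul] at this
    exact absurd (mul_le_mul_right hle 2) (not_le.2 this)
  refine measure_mono_null hsub (measure_iUnion_null fun N => ?_)
  refine le_antisymm ?_ (zero_le)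
  refine ge_of_tendsto hlim ?_
  have e1 : ∀ᶠ r in 𝓝[>] (0 : ℝ), r ∈ Set.Ioo (0 : ℝ) (1 / ((N : ℝ) + 1)) :=
    Ioo_mem_nhdsGT (by positivity)
  have e2 : ∀ᶠ r in 𝓝[>] (0 : ℝ), r ∈ Set.Ioo (0 : ℝ) (1 / (2 * ((K : ℝ) + 1))) :=
    Ioo_mem_nhdsGT (by positivity)
  filter_upwards [e1, e2] with r hr hr2
  have hKr : K * r ≤ 1 / 2 := by
    have hK := K.coe_nonneg
    have h1 := hr2.2
    rw [lt_div_iff₀ (by positivity)] at h1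
    nlinarith [hr.1]
  have key := dlb_avg E hE K L hL hL1 r hr.1.le hKr
  have hpos : volume (closedBall (0 : En m) r) ≠ 0 :=
    (measure_closedBall_pos volume _ hr.1).ne'
  have hfin : volume (closedBall (0 : En m) r) ≠ ∞ := measure_closedBall_lt_top.ne
  rw [ENNReal.mul_le_mul_iff_left hpos hfin] at key
  refine (measure_mono ?_).trans key
  rintro x ⟨hx, hx2⟩
  exact ⟨hx, hx2 r hr⟩

/-- If `A ⊂ ℝⁿ` is Borel and `W₀ : A → G(n,m)` is Lipschitzian, then for
`ℒⁿ`-a.e. `x ∈ A`,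
`limsup_{r→0⁺} ℋ^m(A ∩ B̄(x,r) ∩ (x + W₀(x))) / (α(m)·r^m) ≥ 1/2ⁿ`. -/
theorem density_lower_bound
    (n m : ℕ) (hm : 1 ≤ m) (hmn : m + 1 ≤ n)
    (A : Set (En n)) (hA : MeasurableSet A)
    (W₀ : En n → Submodule ℝ (En n))
    (hrank : ∀ x ∈ A, Module.finrank ℝ (W₀ x) = m)
    (K : ℝ≥0) (hlip : LipschitzOnWith K (fun x => projCLM (W₀ x)) A) :
    ∀ᵐ x ∂(volume.restrict A),
      (1 / 2 ^ n : ℝ≥0∞) ≤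
        limsup (fun r : ℝ =>
            μH[(m : ℝ)] (A ∩ closedBall x r ∩ {y | y - x ∈ W₀ x}) /
              (unitBallVol m * ENNReal.ofReal (r ^ m)))
          (𝓝[>] (0 : ℝ)) := by
  rw [ae_restrict_iff' hA, ae_iff]
  set D : Set (En n) := {x | ¬ (x ∈ A → (1 / 2 ^ n : ℝ≥0∞) ≤
        limsup (fun r : ℝ =>
            μH[(m : ℝ)] (A ∩ closedBall x r ∩ {y | y - x ∈ W₀ x}) /
              (unitBallVol m * ENNReal.ofReal (r ^ m)))
          (𝓝[>] (0 : ℝ)))} with hD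
  apply measure_null_of_locally_null
  intro x0 hx0
  have hx0A : x0 ∈ A := by
    by_contra h
    exact hx0 (fun h' => absurd h' h)
  set δ : ℝ := 1 / (2 * ((K : ℝ) + 1)) with hδ
  have hδpos : 0 < δ := by positivity
  refine ⟨D ∩ ball x0 δ, inter_mem_nhdsWithin _ (ball_mem_nhds _ hδpos), ?_⟩
  have hA' : MeasurableSet (A ∩ ball x0 δ) := hA.inter measurableSet_ball
  have hfin : volume (A ∩ ball x0 δ) ≠ ∞ :=
    ((measure_mono Set.inter_subset_right).trans_lt measure_ball_lt_top).ne
  refine le_antisymm (le_of_forall_pos_le_add fun ε hε => ?_) zero_le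
  obtain ⟨E, hEA, hE, hEε⟩ := hA'.exists_isCompact_diff_lt hfin hε.ne'
  have hDE : volume (D ∩ E) = 0 := by
    let b := (stdOrthonormalBasis ℝ (W₀ x0)).reindex (finCongr (hrank x0 hx0A))
    let ι : En m →L[ℝ] En n := (W₀ x0).subtypeL.comp
      (b.repr.symm.toContinuousLinearEquiv : En m →L[ℝ] (W₀ x0))
    have hι : ∀ w, ‖ι w‖ = ‖w‖ := fun w => b.repr.symm.norm_map w
    have hιmem : ∀ w, ι w ∈ W₀ x0 := fun w => (b.repr.symm w).2
    have hPι : ∀ w, projCLM (W₀ x0) (ι w) = ι w := fun w =>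
      Submodule.starProjection_eq_self_iff.2 (hιmem w)
    let L : En n → (En m →L[ℝ] En n) := fun x => (projCLM (W₀ x)).comp ι
    have hι1 : ‖ι‖ ≤ 1 := ContinuousLinearMap.opNorm_le_bound _ zero_le_one (fun w => by
      rw [hι, one_mul])
    have hEsub : E ⊆ A := hEA.trans Set.inter_subset_left
    have hL : LipschitzOnWith K L E := by
      apply LipschitzOnWith.of_dist_le_mul
      intro x hx y hy
      refine le_trans ?_ (hlip.dist_le_mul x (hEsub hx) y (hEsub hy))
      rw [dist_eq_norm, dist_eq_norm]
      have : L x - L y = (projCLM (W₀ x) - projCLM (W₀ y)).comp ι := by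
        ext w; simp [L]
      rw [this]
      exact (ContinuousLinearMap.opNorm_comp_le _ _).trans
        (mul_le_of_le_one_right (norm_nonneg _) hι1)
    have hL1 : ∀ x, ∀ w, ‖L x w‖ ≤ ‖w‖ := by
      intro x w
      rw [← hι w]
      exact (W₀ x).norm_starProjection_apply_le (ι w)
    have hLmem : ∀ x w, L x w ∈ W₀ x := fun x w =>
      Submodule.coe_mem ((W₀ x).orthogonalProjectionOnto (ι w))
    have hLanti : ∀ x ∈ E, AntilipschitzWith 2 (L x) := by
      intro x hx
      apply AddMonoidHomClass.antilipschitz_of_bound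
      intro w
      have h1 : ‖projCLM (W₀ x) - projCLM (W₀ x0)‖ ≤ 1 / 2 := by
        have h2 := hlip.dist_le_mul x (hEsub hx) x0 hx0A
        rw [dist_eq_norm] at h2
        have h3 : dist x x0 < δ := (hEA hx).2
        have hK := K.coe_nonneg
        have h4 : (K : ℝ) * δ ≤ 1 / 2 := by
          rw [hδ, mul_one_div, div_le_div_iff₀ (by positivity) (by norm_num)]
          linarith
        calc _ ≤ K * dist x x0 := h2
          _ ≤ K * δ := by gcongr
          _ ≤ _ := h4
      have h5 : ι w = L x w - (projCLM (W₀ x) - projCLM (W₀ x0)) (ι w) := by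
        simp [L, hPι]
      have h6 : ‖w‖ ≤ ‖L x w‖ + 1 / 2 * ‖w‖ := by
        calc ‖w‖ = ‖ι w‖ := (hι w).symm
          _ = ‖L x w - (projCLM (W₀ x) - projCLM (W₀ x0)) (ι w)‖ := by rw [← h5]
          _ ≤ ‖L x w‖ + ‖(projCLM (W₀ x) - projCLM (W₀ x0)) (ι w)‖ := norm_sub_le _ _
          _ ≤ ‖L x w‖ + ‖projCLM (W₀ x) - projCLM (W₀ x0)‖ * ‖ι w‖ := by
              gcongr; exact ContinuousLinearMap.le_opNorm _ _
          _ ≤ _ := by rw [hι]; gcongr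
      have : ((2 : ℝ≥0) : ℝ) = 2 := rfl
      rw [this]
      linarith
    refine measure_mono_null ?_ (dlb_freq E hE K L hL (fun x _ => hL1 x))
    rintro x ⟨hxD, hxE⟩
    refine ⟨hxE, fun hfreq => hxD fun _ => ?_⟩
    apply le_limsup_of_frequently_le'
    refine (hfreq.and_eventually self_mem_nhdsWithin).mono ?_
    rintro r ⟨hr, hr0 : 0 < r⟩
    set S : Set (En m) := {w : En m | w ∈ closedBall 0 r ∧ x + L x w ∈ E} with hS
    have hvol : volume (closedBall (0 : En m) r) = unitBallVol m * ENNReal.ofReal (r ^ m) := by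
      rw [Measure.addHaar_closedBall _ _ hr0.le, mul_comm]
      simp [unitBallVol]
    have hpos : volume (closedBall (0 : En m) r) ≠ 0 :=
      (measure_closedBall_pos volume _ hr0).ne'
    have hfin : volume (closedBall (0 : En m) r) ≠ ∞ := measure_closedBall_lt_top.ne
    rw [← hvol, ENNReal.le_div_iff_mul_le (Or.inl hpos) (Or.inl hfin)]
    have hanti : AntilipschitzWith 2 (fun w => x + L x w) := by
      intro a b
      simpa using hLanti x hxE a b
    have h1 : volume S ≤ 2 ^ m * μH[(m : ℝ)] (A ∩ closedBall x r ∩ {y | y - x ∈ W₀ x}) := by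
      refine (dlb_vol_le_hausdorff m S).trans ?_
      refine (hanti.le_hausdorffMeasure_image (d := (m : ℝ)) (by positivity) S).trans ?_
      have : ((2 : ℝ≥0) : ℝ≥0∞) ^ (m : ℝ) = 2 ^ m := by simp
      rw [this]
      gcongr
      rintro _ ⟨w, hw, rfl⟩
      refine ⟨⟨hEsub hw.2, ?_⟩, ?_⟩
      · have : ‖w‖ ≤ r := by simpa using hw.1
        simpa using (hL1 x w).trans this
      · simpa using hLmem x w
    have h2 : volume (closedBall (0 : En m) r) ≤
        2 ^ n * μH[(m : ℝ)] (A ∩ closedBall x r ∩ {y | y - x ∈ W₀ x}) := by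
      calc _ ≤ 2 * volume S := hr
        _ ≤ 2 * (2 ^ m * μH[(m : ℝ)] (A ∩ closedBall x r ∩ {y | y - x ∈ W₀ x})) := by gcongr
        _ = 2 ^ (m + 1) * μH[(m : ℝ)] (A ∩ closedBall x r ∩ {y | y - x ∈ W₀ x}) := by ring
        _ ≤ _ := by gcongr; norm_num
    rw [one_div, mul_comm, ← div_eq_mul_inv]
    exact ENNReal.div_le_of_le_mul' h2
  calc volume (D ∩ ball x0 δ) ≤ volume ((D ∩ E) ∪ ((A ∩ ball x0 δ) \ E)) := by
        apply measure_mono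
        rintro x ⟨hx, hxb⟩
        by_cases hxE : x ∈ E
        · exact Or.inl ⟨hx, hxE⟩
        · refine Or.inr ⟨⟨?_, hxb⟩, hxE⟩
          by_contra h
          exact hx (fun h' => absurd h' h)
    _ ≤ volume (D ∩ E) + volume ((A ∩ ball x0 δ) \ E) := measure_union_le _ _
    _ ≤ 0 + ε := by rw [hDE]; gcongr
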